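/- With the notation below, suppose b_0+b_2 ≡ b_1+b_3 ≡ 1 (mod 2), that D_4(b)·D_4(c) is 2^8 times an odd integer, and that ββ̄·γγ̄ is 2^7 times an odd integer. Then D_4(b)·D_4(c)·ββ̄·γγ̄ = 2^15 · p · (2m+1) for some prime p ∈ P and some integer m. -/

import Mathlib

open Matrix Complex

def D4 (x0 x1 x2 x3 : ℤ) : ℤ :=
  (Matrix.of ![![x0, x1, x2, x3], ![x3, x0, x1, x2], ![x2, x3, x0, x1], ![x1, x2, x3, x0]]).det

def Pset : Set ℤ := {p : ℤ | Prime p ∧ 0 < p ∧ p ≡ -3 [ZMOD 8]}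

def bI (a : ℕ → ℤ) (i : ℕ) : ℤ := (a i + a (i + 8)) + (a (i + 4) + a (i + 12))

def cI (a : ℕ → ℤ) (i : ℕ) : ℤ := (a i + a (i + 8)) - (a (i + 4) + a (i + 12))

def dd (a : ℕ → ℤ) (i : ℕ) : ℤ := a i - a (i + 8)

noncomputable def alphaD (d : ℕ → ℤ) (i : ℕ) : ℂ := (d i : ℂ) + Complex.I * (d (i + 4) : ℂ)

noncomputable def betaD (d : ℕ → ℤ) : ℂ :=
  (alphaD d 0 + alphaD d 2) ^ 2 - (alphaD d 1 + alphaD d 3) ^ 2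

noncomputable def gammaD (d : ℕ → ℤ) : ℂ :=
  (alphaD d 0 - alphaD d 2) ^ 2 + (alphaD d 1 - alphaD d 3) ^ 2

theorem Nat.mod_eight_eq_one_of_forall_prime_dvd (n : ℕ)
    (hn : n ≠ 0) (h : ∀ p : ℕ, p.Prime → p ∣ n → p % 8 = 1) : n % 8 = 1 := by
  induction n using Nat.recOnMul with
  | zero => exact absurd rfl hn
  | one => rfl
  | prime p hp => exact h p hp dvd_rfl
  | mul a b iha ihb =>
    obtain ⟨ha, hb⟩ := mul_ne_zero_iff.1 hn
    rw [Nat.mul_mod, iha ha fun p hp hd => h p hp (hd.mul_right b),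
      ihb hb fun p hp hd => h p hp (hd.mul_left a)]

theorem Nat.exists_prime_mod_eight_eq_five_of_sq_add_sq {n x y : ℕ} (hn : n % 8 = 5)
    (hxy : n = x ^ 2 + y ^ 2) : ∃ p : ℕ, p.Prime ∧ p % 8 = 5 ∧ p ∣ n := by
  obtain ⟨a, b, hab, hsq⟩ := Nat.eq_sq_add_sq_iff_eq_sq_mul.1 ⟨x, y, hxy⟩
  by_contra! hcon
  have hb0 : b ≠ 0 := by
    rintro rfl
    rw [mul_zero] at hab
    omega
  have hb : b % 8 = 1 := by
    refine Nat.mod_eight_eq_one_of_forall_prime_dvd b hb0 fun p hp hpb => ?_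
    have hpn : p ∣ n := hab ▸ hpb.mul_left _
    have h4 : p % 4 ≠ 3 := by
      have : Fact p.Prime := ⟨hp⟩
      exact ZMod.mod_four_ne_three_of_sq_eq_neg_one
        (y := (ZMod.isSquare_neg_one_of_dvd hpb hsq).choose)
        (by rw [sq]; exact (ZMod.isSquare_neg_one_of_dvd hpb hsq).choose_spec.symm)
    have h5 : p % 8 ≠ 5 := fun h => hcon p hp h hpn
    have h2 : p % 2 ≠ 0 := fun h => by
      have := (Nat.dvd_of_mod_eq_zero h).trans hpn
      omega
    omega
  have ha : a ^ 2 % 8 = 0 ∨ a ^ 2 % 8 = 1 ∨ a ^ 2 % 8 = 4 := by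
    have : a % 8 < 8 := Nat.mod_lt _ (by norm_num)
    rw [Nat.pow_mod]
    interval_cases a % 8 <;> simp
  rw [hab, Nat.mul_mod, hb] at hn
  omega

theorem Int.exists_mem_Pset_dvd_of_sq_add_sq {n x y : ℤ} (hn : n % 8 = 5)
    (hxy : n = x ^ 2 + y ^ 2) : ∃ p ∈ Pset, p ∣ n := by
  have hcast : n = ((x.natAbs ^ 2 + y.natAbs ^ 2 : ℕ) : ℤ) := by
    push_cast
    rw [sq_abs, sq_abs, hxy]
  obtain ⟨p, hp, hp5, hpd⟩ := Nat.exists_prime_mod_eight_eq_five_of_sq_add_sq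
    (n := x.natAbs ^ 2 + y.natAbs ^ 2) (by omega) rfl
  refine ⟨p, ⟨Nat.prime_iff_prime_int.1 hp, mod_cast hp.pos, ?_⟩, ?_⟩
  · rw [Int.ModEq]
    omega
  · rw [hcast]
    exact_mod_cast hpd

theorem Int.exists_mem_Pset_dvd_of_two_mul {z w : ℤ} (h : (z ^ 2 + w ^ 2) % 16 = 10) :
    ∃ p ∈ Pset, p ∣ z ^ 2 + w ^ 2 := by
  have hpar : (z + w) % 2 = 0 := by
    have h2 : Even (z ^ 2 + w ^ 2) := Int.even_iff.2 (by omega)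
    refine Int.even_iff.1 ?_
    simpa [parity_simps] using h2
  obtain ⟨k, hk⟩ : ∃ k, z = 2 * k - w := ⟨(z + w) / 2, by omega⟩
  have e : z ^ 2 + w ^ 2 = 2 * (k ^ 2 + (k - w) ^ 2) := by
    rw [hk]
    ring
  obtain ⟨p, hp, hd⟩ := Int.exists_mem_Pset_dvd_of_sq_add_sq (n := k ^ 2 + (k - w) ^ 2)
    (by omega) rfl
  exact ⟨p, hp, e ▸ hd.mul_left 2⟩

theorem Int.exists_mem_Pset_dvd_of_four_mul {x k : ℤ} (hx : x % 4 = 2) (hk : Odd k) :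
    ∃ p ∈ Pset, p ∣ x ^ 2 + (4 * k) ^ 2 := by
  obtain ⟨y, rfl⟩ : ∃ y, x = 2 * (2 * y + 1) := ⟨x / 4, by omega⟩
  have hy := Int.sq_mod_four_eq_one_of_odd hk
  obtain ⟨m, hm⟩ := Int.even_mul_succ_self y
  obtain ⟨p, hp, hd⟩ := Int.exists_mem_Pset_dvd_of_sq_add_sq
    (n := (2 * y + 1) ^ 2 + (2 * k) ^ 2) (by
      have : (2 * y + 1) ^ 2 + (2 * k) ^ 2 = 8 * m + 1 + 4 * k ^ 2 := by linear_combination 4 * hm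
      omega) rfl
  exact ⟨p, hp, (hd.mul_left 4).trans (by ring_nf; rfl)⟩

theorem Int.odd_sq_mod_eight {x : ℤ} (hx : Odd x) : x ^ 2 % 8 = 1 := by
  obtain ⟨k, rfl⟩ := hx
  obtain ⟨m, hm⟩ := Int.even_mul_succ_self k
  have : (2 * k + 1) ^ 2 = 8 * m + 1 := by linear_combination 4 * hm
  omega

theorem D4_eq (x0 x1 x2 x3 : ℤ) : D4 x0 x1 x2 x3 =
    ((x0 + x2) ^ 2 - (x1 + x3) ^ 2) * ((x0 - x2) ^ 2 + (x1 - x3) ^ 2) := by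
  simp [D4, Matrix.det_succ_row_zero, Fin.sum_univ_succ, Fin.succAbove]
  ring

theorem sixteen_dvd_D4 {x0 x1 x2 x3 : ℤ} (h02 : Odd (x0 + x2)) (h13 : Odd (x1 + x3)) :
    16 ∣ D4 x0 x1 x2 x3 := by
  have hz : Odd (x0 - x2) := by grind
  have hw : Odd (x1 - x3) := by grind
  have := Int.odd_sq_mod_eight h02
  have := Int.odd_sq_mod_eight h13
  have := Int.odd_sq_mod_eight hz
  have := Int.odd_sq_mod_eight hw
  rw [D4_eq]
  exact mul_dvd_mul (a := (8 : ℤ)) (c := 2) (by omega) (by omega)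

theorem sq_add_sq_mod_sixteen {x0 x1 x2 x3 : ℤ} (h02 : Odd (x0 + x2)) (h13 : Odd (x1 + x3))
    (h32 : ¬ 32 ∣ D4 x0 x1 x2 x3) (h4 : 4 ∣ x0 * x2 + x1 * x3) :
    ((x0 - x2) ^ 2 + (x1 - x3) ^ 2) % 16 = 10 := by
  have hz : Odd (x0 - x2) := by grind
  have hw : Odd (x1 - x3) := by grind
  have := Int.odd_sq_mod_eight h02
  have := Int.odd_sq_mod_eight h13
  have := Int.odd_sq_mod_eight hz
  have := Int.odd_sq_mod_eight hw
  have h16 : ¬ 16 ∣ (x0 + x2) ^ 2 - (x1 + x3) ^ 2 := fun h => h32 <| by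
    rw [D4_eq]
    exact mul_dvd_mul (a := (16 : ℤ)) (c := 2) h (by omega)
  have e : (x0 - x2) ^ 2 + (x1 - x3) ^ 2 =
      (x0 + x2) ^ 2 + (x1 + x3) ^ 2 - 4 * (x0 * x2 + x1 * x3) := by ring
  omega

theorem Int.not_dvd_of_mul_eq_two_pow_mul_odd {x y t : ℤ} {i j n : ℕ} (ht : Odd t)
    (h : x * y = 2 ^ n * t) (hn : n < i + j) (hx : 2 ^ i ∣ x) : ¬ 2 ^ j ∣ y := fun hy => by
  have h1 : (2 : ℤ) ^ (n + 1) ∣ 2 ^ n * t :=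
    (pow_dvd_pow 2 hn).trans (by rw [← h, pow_add]; exact mul_dvd_mul hx hy)
  rw [pow_succ] at h1
  have h2 := (mul_dvd_mul_iff_left (by positivity)).1 h1
  exact (Int.not_even_iff_odd.2 ht) (even_iff_two_dvd.2 h2)

theorem Int.odd_of_mul_eq_two_pow_seven_mul_odd {x k z l t : ℤ} (ht : Odd t)
    (hx : x % 4 = 2) (hz : z % 4 = 0)
    (h : (x ^ 2 + (4 * k) ^ 2) * (z ^ 2 + (4 * l) ^ 2) = 2 ^ 7 * t) : Odd l := by
  by_contra hl
  obtain ⟨m, rfl⟩ := even_iff_two_dvd.1 (Int.not_odd_iff_even.1 hl)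
  obtain ⟨n, rfl⟩ := Int.dvd_of_emod_eq_zero hz
  obtain ⟨y, rfl⟩ : ∃ y, x = 2 * (2 * y + 1) := ⟨x / 4, by omega⟩
  have e : ((2 * y + 1) ^ 2 + (2 * k) ^ 2) * (n ^ 2 + (2 * m) ^ 2) = 2 * t := by
    have e4 : (64 : ℤ) * (((2 * y + 1) ^ 2 + (2 * k) ^ 2) * (n ^ 2 + (2 * m) ^ 2)) =
        64 * (2 * t) := by linear_combination h
    exact mul_left_cancel₀ (by norm_num) e4
  have hn : Even n := by
    have h2 : Even (((2 * y + 1) ^ 2 + (2 * k) ^ 2) * (n ^ 2 + (2 * m) ^ 2)) := by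
      rw [e]
      exact even_two_mul t
    have h3 : ¬ Even ((2 * y + 1) ^ 2 + (2 * k) ^ 2) := by simp [parity_simps]
    simpa [parity_simps] using (Int.even_mul.1 h2).resolve_left h3
  obtain ⟨r, rfl⟩ := even_iff_two_dvd.1 hn
  have e2 : t = 2 * (((2 * y + 1) ^ 2 + (2 * k) ^ 2) * (r ^ 2 + m ^ 2)) := by linarith
  exact Int.not_even_iff_odd.2 ht (e2 ▸ even_two_mul _)

theorem Int.exists_mem_Pset_dvd_mul {x k z l t : ℤ} (ht : Odd t)
    (hx : Even x) (hz : Even z) (hkl : Even (k - l))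
    (h : (x ^ 2 + (4 * k) ^ 2) * (z ^ 2 + (4 * l) ^ 2) = 2 ^ 7 * t) :
    ∃ p ∈ Pset, p ∣ (x ^ 2 + (4 * k) ^ 2) * (z ^ 2 + (4 * l) ^ 2) := by
  have hx2 := Int.even_iff.1 hx
  have hz2 := Int.even_iff.1 hz
  rcases (by omega : x % 4 = 0 ∨ x % 4 = 2) with hx4 | hx4 <;>
    rcases (by omega : z % 4 = 0 ∨ z % 4 = 2) with hz4 | hz4
  · obtain ⟨y, rfl⟩ := Int.dvd_of_emod_eq_zero hx4
    obtain ⟨w, rfl⟩ := Int.dvd_of_emod_eq_zero hz4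
    exact absurd ⟨w ^ 2 + l ^ 2, by ring⟩ (Int.not_dvd_of_mul_eq_two_pow_mul_odd (i := 4) (j := 4)
      ht h (by norm_num) ⟨y ^ 2 + k ^ 2, by ring⟩)
  · have hk := Int.odd_of_mul_eq_two_pow_seven_mul_odd ht hz4 hx4 ((mul_comm _ _).trans h)
    obtain ⟨p, hp, hd⟩ := Int.exists_mem_Pset_dvd_of_four_mul (k := l) hz4 (by grind)
    exact ⟨p, hp, hd.mul_left _⟩
  · have hl := Int.odd_of_mul_eq_two_pow_seven_mul_odd ht hx4 hz4 h
    obtain ⟨p, hp, hd⟩ := Int.exists_mem_Pset_dvd_of_four_mul (k := k) hx4 (by grind)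
    exact ⟨p, hp, hd.mul_right _⟩
  · obtain ⟨y, rfl⟩ : ∃ y, x = 2 * (2 * y + 1) := ⟨x / 4, by omega⟩
    obtain ⟨w, rfl⟩ : ∃ w, z = 2 * (2 * w + 1) := ⟨z / 4, by omega⟩
    have e4 : (16 : ℤ) * (((2 * y + 1) ^ 2 + (2 * k) ^ 2) * ((2 * w + 1) ^ 2 + (2 * l) ^ 2)) =
        16 * (2 * (4 * t)) := by linear_combination h
    have e := mul_left_cancel₀ (by norm_num) e4
    have h1 : Odd ((2 * y + 1) ^ 2 + (2 * k) ^ 2) := by grind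
    have h2 : Odd ((2 * w + 1) ^ 2 + (2 * l) ^ 2) := by grind
    exact absurd (e ▸ h1.mul h2) (Int.not_odd_iff_even.2 (even_two_mul _))

theorem betaD_mul_conj (d : ℕ → ℤ) : betaD d * (starRingEnd ℂ) (betaD d) =
    (((d 0 + d 2) ^ 2 - (d 4 + d 6) ^ 2 - (d 1 + d 3) ^ 2 + (d 5 + d 7) ^ 2) ^ 2 +
      (2 * ((d 0 + d 2) * (d 4 + d 6) - (d 1 + d 3) * (d 5 + d 7))) ^ 2 : ℤ) := by
  simp only [betaD, alphaD, map_sub, map_add, map_mul, map_pow, Complex.conj_I, map_intCast]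
  push_cast
  apply Complex.ext <;> simp [pow_two] <;> ring

theorem gammaD_mul_conj (d : ℕ → ℤ) : gammaD d * (starRingEnd ℂ) (gammaD d) =
    (((d 0 - d 2) ^ 2 - (d 4 - d 6) ^ 2 + (d 1 - d 3) ^ 2 - (d 5 - d 7) ^ 2) ^ 2 +
      (2 * ((d 0 - d 2) * (d 4 - d 6) + (d 1 - d 3) * (d 5 - d 7))) ^ 2 : ℤ) := by
  simp only [gammaD, alphaD, map_sub, map_add, map_mul, map_pow, Complex.conj_I, map_intCast]
  push_cast
  apply Complex.ext <;> simp [pow_two] <;> ring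

theorem Int.even_mul_of_odd_add {x y : ℤ} (h : Odd (x + y)) : Even (x * y) := by
  grind [Int.odd_add, Int.not_even_iff_odd]

theorem Int.odd_sq_sub_sq {x y : ℤ} (h : Odd (x + y)) : Odd (x ^ 2 - y ^ 2) := by
  rw [sq_sub_sq]
  exact h.mul (Int.odd_sub.2 (Int.odd_add.1 h))

theorem stmt18 (a : ℕ → ℤ) (B G : ℤ)
    (hB : (B : ℂ) = betaD (dd a) * (starRingEnd ℂ) (betaD (dd a)))
    (hG : (G : ℂ) = gammaD (dd a) * (starRingEnd ℂ) (gammaD (dd a)))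
    (h1 : bI a 0 + bI a 2 ≡ 1 [ZMOD 2]) (h2 : bI a 1 + bI a 3 ≡ 1 [ZMOD 2])
    (hD : ∃ t : ℤ, Odd t ∧
      D4 (bI a 0) (bI a 1) (bI a 2) (bI a 3) * D4 (cI a 0) (cI a 1) (cI a 2) (cI a 3) = 2 ^ 8 * t)
    (hBG : ∃ t : ℤ, Odd t ∧ B * G = 2 ^ 7 * t) :
    ∃ p ∈ Pset, ∃ m : ℤ,
      D4 (bI a 0) (bI a 1) (bI a 2) (bI a 3) * D4 (cI a 0) (cI a 1) (cI a 2) (cI a 3) * (B * G) =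
        2 ^ 15 * p * (2 * m + 1) := by
  have hb02 : Odd (bI a 0 + bI a 2) := Int.odd_iff.2 h1
  have hb13 : Odd (bI a 1 + bI a 3) := Int.odd_iff.2 h2
  have hc02 : Odd (cI a 0 + cI a 2) := by simp only [bI, cI] at *; grind
  have hc13 : Odd (cI a 1 + cI a 3) := by simp only [bI, cI] at *; grind
  have hd02 : Odd (dd a 0 + dd a 2 + dd a 4 + dd a 6) := by simp only [bI, dd] at *; grind
  have hd13 : Odd (dd a 1 + dd a 3 + dd a 5 + dd a 7) := by simp only [bI, dd] at *; grind
  obtain ⟨t, ht, hDt⟩ := hD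
  obtain ⟨r, hr, hBGr⟩ := hBG
  suffices hp : ∃ p ∈ Pset, p ∣
      D4 (bI a 0) (bI a 1) (bI a 2) (bI a 3) * D4 (cI a 0) (cI a 1) (cI a 2) (cI a 3) * (B * G) by
    obtain ⟨p, hp, hpd⟩ := hp
    have htot : D4 (bI a 0) (bI a 1) (bI a 2) (bI a 3) *
        D4 (cI a 0) (cI a 1) (cI a 2) (cI a 3) * (B * G) = 2 ^ 15 * (t * r) := by
      rw [hDt, hBGr]
      ring
    have hp2 : ¬ p ∣ 2 ^ 15 := fun h => by
      have h5 : p % 8 = 5 := by simpa [Int.ModEq] using hp.2.2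
      have := Int.le_of_dvd (by norm_num) (hp.1.dvd_of_dvd_pow h)
      have := hp.2.1
      omega
    rw [htot] at hpd ⊢
    obtain ⟨k, hk⟩ := (hp.1.dvd_or_dvd hpd).resolve_left hp2
    have hkodd : Odd k := (Int.odd_mul.1 (hk ▸ ht.mul hr)).2
    obtain ⟨m, rfl⟩ := hkodd
    exact ⟨p, hp, m, by rw [hk]; ring⟩
  have hb32 := Int.not_dvd_of_mul_eq_two_pow_mul_odd (i := 4) (j := 5) ht
    ((mul_comm _ _).trans hDt) (by norm_num) (sixteen_dvd_D4 hc02 hc13)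
  have hc32 := Int.not_dvd_of_mul_eq_two_pow_mul_odd (i := 4) (j := 5) ht
    hDt (by norm_num) (sixteen_dvd_D4 hb02 hb13)
  by_cases hb4 : 4 ∣ bI a 0 * bI a 2 + bI a 1 * bI a 3
  · obtain ⟨p, hp, hd⟩ := Int.exists_mem_Pset_dvd_of_two_mul
      (sq_add_sq_mod_sixteen hb02 hb13 hb32 hb4)
    exact ⟨p, hp, by rw [D4_eq (bI a 0)]; exact ((hd.mul_left _).mul_right _).mul_right _⟩
  by_cases hc4 : 4 ∣ cI a 0 * cI a 2 + cI a 1 * cI a 3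
  · obtain ⟨p, hp, hd⟩ := Int.exists_mem_Pset_dvd_of_two_mul
      (sq_add_sq_mod_sixteen hc02 hc13 hc32 hc4)
    exact ⟨p, hp, by rw [D4_eq (cI a 0)]; exact ((hd.mul_left _).mul_left _).mul_right _⟩
  have hS : Even (dd a 0 * dd a 2 + dd a 4 * dd a 6 + dd a 1 * dd a 3 + dd a 5 * dd a 7) := by
    have hb02' := Int.even_iff.1 (Int.even_mul_of_odd_add hb02)
    have hb13' := Int.even_iff.1 (Int.even_mul_of_odd_add hb13)
    have hc02' := Int.even_iff.1 (Int.even_mul_of_odd_add hc02)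
    have hc13' := Int.even_iff.1 (Int.even_mul_of_odd_add hc13)
    have e : (bI a 0 * bI a 2 + bI a 1 * bI a 3) + (cI a 0 * cI a 2 + cI a 1 * cI a 3) =
        2 * (dd a 0 * dd a 2 + dd a 4 * dd a 6 + dd a 1 * dd a 3 + dd a 5 * dd a 7) +
        4 * (a 8 * a 2 + a 0 * a 10 + a 12 * a 6 + a 4 * a 14 + a 9 * a 3 + a 1 * a 11 +
          a 13 * a 7 + a 5 * a 15) := by
      simp only [bI, cI, dd]
      ring
    rw [Int.even_iff]
    omega
  have hB' := Int.cast_injective (hB.trans (betaD_mul_conj (dd a)))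
  have hG' := Int.cast_injective (hG.trans (gammaD_mul_conj (dd a)))
  clear hB hG
  generalize dd a = d at *
  have hd02' := Int.odd_iff.1 hd02
  have hd13' := Int.odd_iff.1 hd13
  have hp : Odd (d 0 + d 2 + (d 4 + d 6)) := Int.odd_iff.2 (by omega)
  have hq : Odd (d 1 + d 3 + (d 5 + d 7)) := Int.odd_iff.2 (by omega)
  have hr' : Odd (d 0 - d 2 + (d 4 - d 6)) := Int.odd_iff.2 (by omega)
  have hs : Odd (d 1 - d 3 + (d 5 - d 7)) := Int.odd_iff.2 (by omega)
  have hU : Even ((d 0 + d 4) * (d 2 + d 6)) :=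
    Int.even_mul_of_odd_add (Int.odd_iff.2 (by omega))
  have hV : Even ((d 1 + d 7) * (d 3 + d 5)) :=
    Int.even_mul_of_odd_add (Int.odd_iff.2 (by omega))
  obtain ⟨k, hk⟩ := (Int.even_mul_of_odd_add hp).sub (Int.even_mul_of_odd_add hq)
  obtain ⟨l, hl⟩ := (Int.even_mul_of_odd_add hr').add (Int.even_mul_of_odd_add hs)
  have hkl : Even (k - l) := by
    have e : k - l = (d 0 + d 4) * (d 2 + d 6) + (d 1 + d 7) * (d 3 + d 5) -
        (d 0 * d 2 + d 4 * d 6 + d 1 * d 3 + d 5 * d 7) - 2 * (d 1 * d 5 + d 3 * d 7) := by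
      linarith
    rw [e]
    exact ((hU.add hV).sub hS).sub (even_two_mul _)
  rw [hk, show 2 * (k + k) = 4 * k by ring] at hB'
  rw [hl, show 2 * (l + l) = 4 * l by ring] at hG'
  rw [hB', hG'] at hBGr ⊢
  have hX := (Int.odd_sq_sub_sq hp).sub_odd (Int.odd_sq_sub_sq hq)
  have hZ := (Int.odd_sq_sub_sq hr').add_odd (Int.odd_sq_sub_sq hs)
  rw [← sub_add] at hX
  rw [← add_sub_assoc] at hZ
  obtain ⟨p, hp, hd⟩ := Int.exists_mem_Pset_dvd_mul hr hX hZ hkl hBGr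
  exact ⟨p, hp, hd.mul_left _⟩
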